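/- arXiv:2003.02521 — 4 statements merged into one kernel-verified Lean document; each statement's English description precedes it below -/
import Mathlib

section
/- (Manageable partitions exist) Let Σ = Σ_UID ∪ Σ_UFD be a set of UIDs and UFDs closed under finite implication. Then Σ_UID has a manageable partition with respect to Σ_UFD: an ordered partition of Σ_UID each of whose classes is either reversible or trivial. -/
namespace FQA

/-- A relational signature: a finite set of relation names, each with an arity `≥ 1`. -/
structure Sig where
  Rel : Type
  rel_fin : Finite Rel
  ar : Rel → ℕ
  ar_pos : ∀ R, 1 ≤ ar R

/-- The positions of a signature: pairs of a relation and an index into its arity. -/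
abbrev Sig.Pos (σ : Sig) : Type := Σ R : σ.Rel, Fin (σ.ar R)

/-- A fact `R(a₁, …, a_{ar R})` with elements from `α`. -/
abbrev Fact (σ : Sig) (α : Type) : Type := Σ R : σ.Rel, Fin (σ.ar R) → α

/-- An instance is a set of facts. -/
abbrev Inst (σ : Sig) (α : Type) : Type := Set (Fact σ α)

variable {σ : Sig} {α β : Type}

/-- Element `a` occurs at position `p` in some fact of the instance `I`. -/
def occursAt (I : Inst σ α) (p : σ.Pos) (a : α) : Prop :=
  ∃ t : Fin (σ.ar p.1) → α, (⟨p.1, t⟩ : Fact σ α) ∈ I ∧ t p.2 = a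

/-- The active domain of an instance: the elements occurring in some fact. -/
def activeDom (I : Inst σ α) : Set α :=
  {a | ∃ F : Fact σ α, F ∈ I ∧ ∃ i, F.2 i = a}

/-- A unary inclusion dependency `src ⊆ dst` (nontrivial: `src ≠ dst`). -/
structure UID (σ : Sig) where
  src : σ.Pos
  dst : σ.Pos
  ne : src ≠ dst

/-- The reverse of a UID. -/
def UID.rev (τ : UID σ) : UID σ := ⟨τ.dst, τ.src, τ.ne.symm⟩

/-- An instance satisfies a UID if every element occurring at `src` also occurs at `dst`. -/
def satUID (I : Inst σ α) (τ : UID σ) : Prop :=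
  ∀ a, occursAt I τ.src a → occursAt I τ.dst a

/-- A unary functional dependency `R^src → R^dst` (nontrivial: `src ≠ dst`). -/
structure UFD (σ : Sig) where
  rel : σ.Rel
  src : Fin (σ.ar rel)
  dst : Fin (σ.ar rel)
  ne : src ≠ dst

/-- The reverse of a UFD. -/
def UFD.rev (φ : UFD σ) : UFD σ := ⟨φ.rel, φ.dst, φ.src, φ.ne.symm⟩

/-- The source position of a UFD, as a position of the signature. -/
def UFD.posSrc (φ : UFD σ) : σ.Pos := ⟨φ.rel, φ.src⟩

/-- The target position of a UFD, as a position of the signature. -/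
def UFD.posDst (φ : UFD σ) : σ.Pos := ⟨φ.rel, φ.dst⟩

/-- An instance satisfies a UFD if any two facts of `rel` agreeing at `src` agree at `dst`. -/
def satUFD (I : Inst σ α) (φ : UFD σ) : Prop :=
  ∀ t u : Fin (σ.ar φ.rel) → α,
    (⟨φ.rel, t⟩ : Fact σ α) ∈ I → (⟨φ.rel, u⟩ : Fact σ α) ∈ I →
    t φ.src = u φ.src → t φ.dst = u φ.dst

/-- A Boolean conjunctive query: existentially quantified variables `Fin nv` and a
conjunction (list) of constant-free atoms, in which every variable occurs. -/
structure CQ (σ : Sig) where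
  nv : ℕ
  atoms : List (Fact σ (Fin nv))
  vars_occur : ∀ x : Fin nv, ∃ A ∈ atoms, ∃ i, A.2 i = x

/-- The size of a CQ: its number of atoms. -/
def CQ.size (q : CQ σ) : ℕ := q.atoms.length

/-- A Boolean CQ holds in an instance iff there is a homomorphism (a match) from its
atoms to facts of the instance. -/
def satCQ (I : Inst σ α) (q : CQ σ) : Prop :=
  ∃ h : Fin q.nv → α, ∀ A ∈ q.atoms, (⟨A.1, fun i => h (A.2 i)⟩ : Fact σ α) ∈ I

/-- A set of UIDs is transitively closed. -/
def TransClosedUID (Su : Set (UID σ)) : Prop :=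
  ∀ τ ∈ Su, ∀ τ' ∈ Su, τ.dst = τ'.src →
    ∀ h : τ.src ≠ τ'.dst, (⟨τ.src, τ'.dst, h⟩ : UID σ) ∈ Su

/-- A set of UFDs is closed under UFD transitivity. -/
def TransClosedUFD (Sf : Set (UFD σ)) : Prop :=
  ∀ (R : σ.Rel) (i j k : Fin (σ.ar R)) (h1 : i ≠ j) (h2 : j ≠ k) (h3 : i ≠ k),
    (⟨R, i, j, h1⟩ : UFD σ) ∈ Sf → (⟨R, j, k, h2⟩ : UFD σ) ∈ Sf →
    (⟨R, i, k, h3⟩ : UFD σ) ∈ Sf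

/-- A position occurs in some UID of `Su`. -/
def occursInUIDs (Su : Set (UID σ)) (p : σ.Pos) : Prop :=
  ∃ τ ∈ Su, τ.src = p ∨ τ.dst = p

/-- The UIDs `Su` and UFDs `Sf` are reversible: both are closed under implication
(transitivity), every UID of `Su` has its reverse in `Su`, and every UFD of `Sf`
whose two positions occur in UIDs of `Su` has its reverse in `Sf`. -/
def Reversible (Su : Set (UID σ)) (Sf : Set (UFD σ)) : Prop :=
  TransClosedUID Su ∧ TransClosedUFD Sf ∧
  (∀ τ ∈ Su, τ.rev ∈ Su) ∧
  (∀ φ ∈ Sf, occursInUIDs Su φ.posSrc → occursInUIDs Su φ.posDst → φ.rev ∈ Sf)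

/-- An instance satisfies a set of UIDs and a set of UFDs. -/
def satAllU (I : Inst σ ℕ) (Su : Set (UID σ)) (Sf : Set (UFD σ)) : Prop :=
  (∀ τ ∈ Su, satUID I τ) ∧ (∀ φ ∈ Sf, satUFD I φ)

/-- Unrestricted open-world entailment with respect to UIDs and UFDs. -/
def unrEntailsU (I₀ : Inst σ ℕ) (Su : Set (UID σ)) (Sf : Set (UFD σ)) (q : CQ σ) : Prop :=
  ∀ I : Inst σ ℕ, I₀ ⊆ I → satAllU I Su Sf → satCQ I q

/-- A (nontrivial) UID is finitely implied by UIDs `Su` and UFDs `Sf`. -/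
def finImpUIDu (Su : Set (UID σ)) (Sf : Set (UFD σ)) (τ : UID σ) : Prop :=
  ∀ I : Inst σ ℕ, I.Finite → satAllU I Su Sf → satUID I τ

/-- A (nontrivial) UFD is finitely implied by UIDs `Su` and UFDs `Sf`. -/
def finImpUFDu (Su : Set (UID σ)) (Sf : Set (UFD σ)) (φ : UFD σ) : Prop :=
  ∀ I : Inst σ ℕ, I.Finite → satAllU I Su Sf → satUFD I φ

/-- `τ ↣ τ'`: writing `τ : R^p ⊆ S^q` and `τ' : S^r ⊆ T^v` with `S^q ≠ S^r`, the
UFD `S^r → S^q` is in `Sf`. -/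
def leads (Sf : Set (UFD σ)) (τ τ' : UID σ) : Prop :=
  ∃ φ ∈ Sf, UFD.posSrc φ = τ'.src ∧ UFD.posDst φ = τ.dst

theorem occ_finite {σ : Sig} (I : Inst σ ℕ) (hI : I.Finite) (p : σ.Pos) :
    {a | occursAt I p a}.Finite := by
  classical
  have h : {a | occursAt I p a} ⊆
      (fun F : Fact σ ℕ => if h : F.1 = p.1 then F.2 (Fin.cast (by rw [h]) p.2) else 0) '' I := by
    rintro a ⟨t, ht, rfl⟩
    exact ⟨_, ht, by simp⟩
  exact (hI.image _).subset h

theorem ufd_fun {σ : Sig} (I : Inst σ ℕ) (φ : UFD σ) (h : satUFD I φ) :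
    ∃ g : ℕ → ℕ, ∀ t : Fin (σ.ar φ.rel) → ℕ, (⟨φ.rel, t⟩ : Fact σ ℕ) ∈ I →
      g (t φ.src) = t φ.dst := by
  classical
  refine ⟨fun a => if h : ∃ t : Fin (σ.ar φ.rel) → ℕ, (⟨φ.rel, t⟩ : Fact σ ℕ) ∈ I ∧ t φ.src = a
    then h.choose φ.dst else 0, fun t ht => ?_⟩
  have hex : ∃ u : Fin (σ.ar φ.rel) → ℕ, (⟨φ.rel, u⟩ : Fact σ ℕ) ∈ I ∧ u φ.src = t φ.src :=
    ⟨t, ht, rfl⟩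
  simp only [hex, dif_pos]
  exact h _ _ hex.choose_spec.1 ht hex.choose_spec.2

theorem ufd_image {σ : Sig} (I : Inst σ ℕ) (φ : UFD σ) (g : ℕ → ℕ)
    (hg : ∀ t : Fin (σ.ar φ.rel) → ℕ, (⟨φ.rel, t⟩ : Fact σ ℕ) ∈ I → g (t φ.src) = t φ.dst) :
    g '' {a | occursAt I φ.posSrc a} = {a | occursAt I φ.posDst a} := by
  ext b
  constructor
  · rintro ⟨a, ⟨t, ht, rfl⟩, rfl⟩
    exact ⟨t, ht, (hg t ht).symm⟩
  · rintro ⟨t, ht, rfl⟩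
    exact ⟨_, ⟨t, ht, rfl⟩, hg t ht⟩

/-- One step of the cardinality preorder. -/
def cstep {σ : Sig} (Su : Set (UID σ)) (Sf : Set (UFD σ)) (p q : σ.Pos) : Prop :=
  (∃ τ ∈ Su, τ.src = p ∧ τ.dst = q) ∨ (∃ φ ∈ Sf, φ.posSrc = q ∧ φ.posDst = p)

theorem cle_card {σ : Sig} (Su : Set (UID σ)) (Sf : Set (UFD σ)) (I : Inst σ ℕ) (hI : I.Finite)
    (hs : satAllU I Su Sf) {p q : σ.Pos} (h : Relation.ReflTransGen (cstep Su Sf) p q) :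
    {a | occursAt I p a}.ncard ≤ {a | occursAt I q a}.ncard := by
  induction h with
  | refl => exact le_rfl
  | tail _ hstep ih =>
    refine ih.trans ?_
    rcases hstep with ⟨τ, hτ, rfl, rfl⟩ | ⟨φ, hφ, rfl, rfl⟩
    · exact Set.ncard_le_ncard (fun a ha => hs.1 τ hτ a ha) (occ_finite I hI _)
    · obtain ⟨g, hg⟩ := ufd_fun I φ (hs.2 φ hφ)
      rw [← ufd_image I φ g hg]
      exact Set.ncard_image_le (occ_finite I hI _)

theorem rev_uid {σ : Sig} (Su : Set (UID σ)) (Sf : Set (UFD σ))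
    (hclU : ∀ τ : UID σ, finImpUIDu Su Sf τ → τ ∈ Su) (τ : UID σ) (hτ : τ ∈ Su)
    (h : Relation.ReflTransGen (cstep Su Sf) τ.dst τ.src) : τ.rev ∈ Su := by
  refine hclU _ fun I hI hs a ha => ?_
  have hsub : {a | occursAt I τ.src a} ⊆ {a | occursAt I τ.dst a} := fun a ha => hs.1 τ hτ a ha
  have := Set.eq_of_subset_of_ncard_le hsub (cle_card Su Sf I hI hs h) (occ_finite I hI _)
  have ha' : a ∈ {a | occursAt I τ.dst a} := ha
  rw [← this] at ha'
  exact ha'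

theorem rev_ufd {σ : Sig} (Su : Set (UID σ)) (Sf : Set (UFD σ))
    (hclF : ∀ φ : UFD σ, finImpUFDu Su Sf φ → φ ∈ Sf) (φ : UFD σ) (hφ : φ ∈ Sf)
    (h : Relation.ReflTransGen (cstep Su Sf) φ.posSrc φ.posDst) : φ.rev ∈ Sf := by
  refine hclF _ fun I hI hs t u ht hu htu => ?_
  obtain ⟨g, hg⟩ := ufd_fun I φ (hs.2 φ hφ)
  have him := ufd_image I φ g hg
  have hc := cle_card Su Sf I hI hs h
  rw [← him] at hc
  have hinj : Set.InjOn g {a | occursAt I φ.posSrc a} :=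
    Set.injOn_of_ncard_image_eq (le_antisymm (Set.ncard_image_le (occ_finite I hI _)) hc)
      (occ_finite I hI _)
  refine hinj ⟨t, ht, rfl⟩ ⟨u, hu, rfl⟩ ?_
  exact (hg t ht).trans (htu.trans (hg u hu).symm)

theorem exists_rank {X : Type} (r : X → X → Prop) :
    ∃ (K : Type) (_ : LinearOrder K) (f : X → K),
      (∀ x y, r x y → f x ≤ f y) ∧ (∀ x y, f x = f y → Relation.ReflTransGen r x y) := by
  letI : Preorder X :=
    { le := Relation.ReflTransGen r
      le_refl := fun _ => Relation.ReflTransGen.refl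
      le_trans := fun _ _ _ => Relation.ReflTransGen.trans }
  refine ⟨LinearExtension (Antisymmetrization X (· ≤ ·)), inferInstance,
    fun x => toLinearExtension (toAntisymmetrization (· ≤ ·) x), ?_, ?_⟩
  · intro x y h
    apply toLinearExtension.monotone
    exact toAntisymmetrization_le_toAntisymmetrization_iff.2 (Relation.ReflTransGen.single h)
  · intro x y h
    have h' : toAntisymmetrization (α := X) (· ≤ ·) x = toAntisymmetrization (· ≤ ·) y := h
    exact (Quotient.exact h').1

theorem exists_blocks {X K : Type} [Finite X] [LinearOrder K] (k : X → K) (S : Set X) :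
    ∃ L : List (Set X),
      (∀ P ∈ L, ∃ x ∈ S, P = {y | y ∈ S ∧ k y = k x}) ∧
      (∀ x ∈ S, ∃ i : Fin L.length, x ∈ L.get i) ∧
      (∀ i j : Fin L.length, ∀ x ∈ L.get i, ∀ y ∈ L.get j, k x ≤ k y → (i : ℕ) ≤ (j : ℕ)) := by
  classical
  have hfin : (k '' S).Finite := (Set.toFinite S).image k
  set l := hfin.toFinset.sort (· ≤ ·) with hl
  have hs : l.SortedLT := Finset.sortedLT_sort _
  refine ⟨l.map fun c => {y | y ∈ S ∧ k y = c}, ?_, ?_, ?_⟩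
  · intro P hP
    obtain ⟨c, hc, rfl⟩ := List.mem_map.1 hP
    obtain ⟨x, hx, rfl⟩ : c ∈ k '' S := by simpa [hl] using hc
    exact ⟨x, hx, rfl⟩
  · intro x hx
    have : k x ∈ l := by simp only [hl, Finset.mem_sort, Set.Finite.mem_toFinset]; exact ⟨x, hx, rfl⟩
    obtain ⟨i, hi⟩ := List.mem_iff_get.1 this
    refine ⟨Fin.cast (by simp) i, ?_⟩
    have : l[(i : ℕ)] = k x := hi
    simp [hx, this]
  · intro i j x hx y hy hxy
    simp only [List.get_eq_getElem, List.getElem_map, Set.mem_setOf_eq] at hx hy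
    have hi : (i : ℕ) < l.length := by simpa using i.2
    have hj : (j : ℕ) < l.length := by simpa using j.2
    by_contra hlt
    push Not at hlt
    have h2 := hs.strictMono_get (a := ⟨j, hj⟩) (b := ⟨i, hi⟩) hlt
    simp only [List.get_eq_getElem] at h2
    rw [← hx.2, ← hy.2] at h2
    exact absurd hxy (not_le.2 h2)

theorem uid_finite (σ : Sig) : Finite (UID σ) := by
  haveI := σ.rel_fin
  refine Finite.of_injective (fun τ : UID σ => (τ.src, τ.dst)) ?_
  rintro ⟨a, b, h⟩ ⟨c, d, h'⟩ heq
  simp only [Prod.mk.injEq] at heq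
  obtain ⟨rfl, rfl⟩ := heq
  rfl

/-- **Manageable partitions exist.** If the UIDs `Su` and UFDs `Sf` are closed under
finite implication, then `Su` has a manageable partition: an ordered partition
(with respect to `↣`) each of whose classes is either reversible (with `Sf`) or
trivial. -/
theorem manageable_partition
    {σ : Sig} (Su : Set (UID σ)) (Sf : Set (UFD σ))
    (hclU : ∀ τ : UID σ, finImpUIDu Su Sf τ → τ ∈ Su)
    (hclF : ∀ φ : UFD σ, finImpUFDu Su Sf φ → φ ∈ Sf) :
    ∃ L : List (Set (UID σ)),
      -- the classes are nonempty and partition `Su`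
      (∀ P ∈ L, P.Nonempty) ∧
      (∀ τ ∈ Su, ∃ i : Fin L.length, τ ∈ L.get i) ∧
      (∀ i : Fin L.length, ∀ τ ∈ L.get i, τ ∈ Su) ∧
      (∀ i j : Fin L.length, i ≠ j → Disjoint (L.get i) (L.get j)) ∧
      -- the partition is ordered with respect to `↣`
      (∀ i j : Fin L.length, ∀ τ ∈ L.get i, ∀ τ' ∈ L.get j,
          leads Sf τ τ' → (i : ℕ) ≤ (j : ℕ)) ∧
      -- each class is reversible or trivial
      (∀ P ∈ L, Reversible P Sf ∨ ∃ τ : UID σ, P = {τ} ∧ ¬ leads Sf τ τ) := by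
  classical
  haveI := uid_finite σ
  obtain ⟨K, _, f, hmono, heq⟩ := exists_rank (cstep Su Sf)
  obtain ⟨e, he⟩ := exists_injective_nat (UID σ)
  have hU : ∀ τ ∈ Su, f τ.src ≤ f τ.dst := fun τ hτ => hmono _ _ (Or.inl ⟨τ, hτ, rfl, rfl⟩)
  have hF : ∀ τ τ' : UID σ, leads Sf τ τ' → f τ.dst ≤ f τ'.src := by
    rintro τ τ' ⟨φ, hφ, h1, h2⟩
    exact hmono _ _ (Or.inr ⟨φ, hφ, h1, h2⟩)
  have hTF : TransClosedUFD Sf := by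
    intro R i j k h1 h2 h3 hij hjk
    exact hclF _ fun I _ hs t u ht hu htu => hs.2 _ hjk t u ht hu (hs.2 _ hij t u ht hu htu)
  have hTU : TransClosedUID Su := by
    intro τ hτ τ' hτ' hd h
    refine hclU _ fun I _ hs a ha => ?_
    have := hs.1 τ hτ a ha
    rw [hd] at this
    exact hs.1 τ' hτ' a this
  let k : UID σ → K ×ₗ (K ×ₗ ℕ) := fun τ =>
    toLex (f τ.src, toLex (f τ.dst, if f τ.src = f τ.dst then 0 else e τ))
  have hk : ∀ τ τ', k τ = k τ' → f τ.src = f τ'.src ∧ f τ.dst = f τ'.dst ∧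
      (f τ.src ≠ f τ.dst → τ = τ') := by
    intro τ τ' h
    simp only [k, EmbeddingLike.apply_eq_iff_eq, Prod.mk.injEq] at h
    obtain ⟨h1, h2, h3⟩ := h
    refine ⟨h1, h2, fun hne => he ?_⟩
    rwa [if_neg hne, if_neg (by rwa [← h1, ← h2])] at h3
  obtain ⟨L, hL1, hL2, hL3⟩ := exists_blocks k Su
  have hmem : ∀ i : Fin L.length, ∀ τ ∈ L.get i, τ ∈ Su := by
    intro i τ hτ
    obtain ⟨x, hx, hP⟩ := hL1 _ (L.get_mem i)
    rw [hP] at hτ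
    exact hτ.1
  refine ⟨L, ?_, hL2, hmem, ?_, ?_, ?_⟩
  · intro P hP
    obtain ⟨x, hx, rfl⟩ := hL1 P hP
    exact ⟨x, hx, rfl⟩
  · intro i j hij
    rw [Set.disjoint_left]
    intro τ hi hj
    exact hij (Fin.ext (le_antisymm (hL3 i j τ hi τ hj le_rfl) (hL3 j i τ hj τ hi le_rfl)))
  · intro i j τ hi τ' hj hlead
    refine hL3 i j τ hi τ' hj ?_
    have h1 := hU τ (hmem i τ hi)
    have h2 := hF _ _ hlead
    have h3 := hU τ' (hmem j τ' hj)
    simp only [k, Prod.Lex.toLex_le_toLex]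
    rcases lt_or_eq_of_le (h1.trans h2) with h | h
    · exact Or.inl h
    · refine Or.inr ⟨h, ?_⟩
      have h4 : f τ.src = f τ.dst := le_antisymm h1 (h2.trans h.ge)
      rcases lt_or_eq_of_le (h2.trans h3) with h5 | h5
      · exact Or.inl h5
      · exact Or.inr ⟨h5, by simp [h4]⟩
  · intro P hP
    obtain ⟨x, hx, rfl⟩ := hL1 P hP
    by_cases hxe : f x.src = f x.dst
    · left
      have hchar : ∀ τ, τ ∈ {y | y ∈ Su ∧ k y = k x} ↔
          τ ∈ Su ∧ f τ.src = f x.src ∧ f τ.dst = f x.src := by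
        intro τ
        constructor
        · rintro ⟨h, h'⟩
          obtain ⟨a, b, -⟩ := hk _ _ h'
          exact ⟨h, a, b.trans hxe.symm⟩
        · rintro ⟨h, a, b⟩
          refine ⟨h, ?_⟩
          simp [k, a, b, hxe.symm]
      refine ⟨?_, hTF, ?_, ?_⟩
      · intro τ hτ τ' hτ' hd h
        rw [hchar] at hτ hτ' ⊢
        exact ⟨hTU τ hτ.1 τ' hτ'.1 hd h, hτ.2.1, hτ'.2.2⟩
      · intro τ hτ
        rw [hchar] at hτ ⊢
        exact ⟨rev_uid Su Sf hclU τ hτ.1 (heq _ _ (hτ.2.2.trans hτ.2.1.symm)), hτ.2.2, hτ.2.1⟩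
      · intro φ hφ h1 h2
        have hocc : ∀ p, occursInUIDs {y | y ∈ Su ∧ k y = k x} p → f p = f x.src := by
          rintro p ⟨τ, hτ, h⟩
          rw [hchar] at hτ
          rcases h with rfl | rfl
          · exact hτ.2.1
          · exact hτ.2.2
        exact rev_ufd Su Sf hclF φ hφ (heq _ _ ((hocc _ h1).trans (hocc _ h2).symm))
    · right
      refine ⟨x, ?_, fun h => hxe (le_antisymm (hU x hx) (hF _ _ h))⟩
      ext τ
      constructor
      · rintro ⟨h, h'⟩
        exact ((hk _ _ h'.symm).2.2 hxe).symm
      · rintro rfl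
        exact ⟨hx, rfl⟩

end FQA
end

section
/- (Cycles in the constraint graph force reversibility) Let Σ = Σ_UID ∪ Σ_UFD be a set of UIDs and UFDs closed under the UID transitivity rule, the UFD transitivity rule, and the cycle rule, and let G(Σ) be its constraint graph. Then for any edge e lying on a directed cycle of G(Σ) and any dependency τ of Σ whose associated edge is e, the reverse τ⁻¹ of τ is also in Σ. -/
namespace FQA

variable {σ : Sig} {α β : Type}

/-- The constraint graph of `Su ∪ Sf`: an edge `(p, q)` for each UID `p ⊆ q` of `Su`
and an edge `(R^b, R^a)` for each UFD `R^a → R^b` of `Sf`. -/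
def cgEdge (Su : Set (UID σ)) (Sf : Set (UFD σ)) (p q : σ.Pos) : Prop :=
  (∃ h : p ≠ q, (⟨p, q, h⟩ : UID σ) ∈ Su) ∨
  (∃ φ ∈ Sf, UFD.posSrc φ = q ∧ UFD.posDst φ = p)

/-- Closure under the cycle rule: from any cycle
`R₁^{p₁} ⊆ R₂^{q₂}, R₂^{p₂} → R₂^{q₂}, R₂^{p₂} ⊆ R₃^{q₃}, …, Rₙ^{pₙ} ⊆ R₁^{q₁},
R₁^{p₁} → R₁^{q₁}` of UIDs of `Su` and UFDs of `Sf`, the reverses of all of its UIDs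
and UFDs are deduced. -/
def CycleClosed (Su : Set (UID σ)) (Sf : Set (UFD σ)) : Prop :=
  ∀ (n : ℕ) (τ : Fin (n + 1) → UID σ) (φ : Fin (n + 1) → UFD σ),
    (∀ i, τ i ∈ Su) → (∀ i, φ i ∈ Sf) →
    (∀ i, (τ i).src = UFD.posSrc (φ i)) →
    (∀ i, (τ i).dst = UFD.posDst (φ (i + 1))) →
    ∀ i, (τ i).rev ∈ Su ∧ (φ i).rev ∈ Sf

/-- UID edge. -/
def UE (Su : Set (UID σ)) (p q : σ.Pos) : Prop := ∃ h : p ≠ q, (⟨p, q, h⟩ : UID σ) ∈ Su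

/-- UFD edge. -/
def FE (Sf : Set (UFD σ)) (p q : σ.Pos) : Prop :=
  ∃ φ ∈ Sf, UFD.posSrc φ = q ∧ UFD.posDst φ = p

/-- A UID edge followed by a UFD edge. -/
def StepE (Su : Set (UID σ)) (Sf : Set (UFD σ)) (p q : σ.Pos) : Prop :=
  ∃ m, UE Su p m ∧ FE Sf m q

theorem UE.trans' {Su : Set (UID σ)} (htU : TransClosedUID Su) {p q r : σ.Pos}
    (h1 : UE Su p q) (h2 : UE Su q r) (h : p ≠ r) : UE Su p r := by
  obtain ⟨a, ha⟩ := h1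
  obtain ⟨b, hb⟩ := h2
  exact ⟨h, htU _ ha _ hb rfl h⟩

theorem FE.ne' {Sf : Set (UFD σ)} {p q : σ.Pos} (h : FE Sf p q) : p ≠ q := by
  obtain ⟨φ, _, rfl, rfl⟩ := h
  intro h
  have h2 : φ.dst = φ.src := by
    simpa [UFD.posSrc, UFD.posDst] using h
  exact φ.ne h2.symm

theorem FE.trans' {Sf : Set (UFD σ)} (htF : TransClosedUFD Sf) {p q r : σ.Pos}
    (h1 : FE Sf p q) (h2 : FE Sf q r) (h : p ≠ r) : FE Sf p r := by
  obtain ⟨⟨R, a, b, hab⟩, hφ, h1, rfl⟩ := h1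
  obtain ⟨⟨R', c, d, hcd⟩, hψ, rfl, h2⟩ := h2
  have h3 := h1.trans h2.symm
  simp only [UFD.posSrc, UFD.posDst] at h3 h
  obtain ⟨rfl, h4⟩ := Sigma.mk.inj_iff.1 h3
  obtain rfl := eq_of_heq h4
  have hcb : c ≠ b := by rintro rfl; exact h rfl
  exact ⟨⟨R, c, b, hcb⟩, htF R c a b hcd hab hcb hψ hφ, rfl, rfl⟩

theorem StepE.seq {Su : Set (UID σ)} {Sf : Set (UFD σ)} {a b : σ.Pos}
    (h : Relation.ReflTransGen (StepE Su Sf) a b) :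
    ∃ (n : ℕ) (v m : ℕ → σ.Pos), v 0 = a ∧ v n = b ∧
      ∀ i < n, UE Su (v i) (m i) ∧ FE Sf (m i) (v (i + 1)) := by
  induction h with
  | refl => exact ⟨0, fun _ => a, fun _ => a, rfl, rfl, by simp⟩
  | @tail b c _ hs ih =>
    obtain ⟨n, v, m, h0, hn, hi⟩ := ih
    obtain ⟨x, hx, hy⟩ := hs
    refine ⟨n + 1, fun i => if i ≤ n then v i else c, fun i => if i < n then m i else x,
      by simpa using h0, by simp, fun i hin => ?_⟩
    rcases Nat.lt_succ_iff_lt_or_eq.1 hin with h | rfl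
    · have h1 : i ≤ n := h.le
      have h2 : i + 1 ≤ n := h
      simpa only [h, h1, h2, if_true] using hi i h
    · subst hn
      simpa using ⟨hx, hy⟩

theorem cycle_rev {Su : Set (UID σ)} {Sf : Set (UFD σ)} (hcyc : CycleClosed Su Sf)
    {a b x : σ.Pos} (hU : UE Su b x) (hF : FE Sf x a)
    (h : Relation.ReflTransGen (StepE Su Sf) a b) : UE Su x b ∧ FE Sf a x := by
  obtain ⟨n, v, m, h0, hn, hi⟩ := StepE.seq h
  have key : ∀ i : Fin (n + 1), ∃ y : σ.Pos, UE Su (v i.val) y ∧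
      FE Sf y (v (i + 1 : Fin (n + 1)).val) ∧ (i = Fin.last n → y = x) := by
    intro i
    by_cases hl : i = Fin.last n
    · subst hl
      refine ⟨x, ?_, ?_, fun _ => rfl⟩
      · simpa [hn] using hU
      · simpa [h0] using hF
    · have hlt : i.val < n := Fin.val_lt_last hl
      have := hi i.val hlt
      refine ⟨m i.val, this.1, ?_, fun h => absurd h hl⟩
      rw [Fin.val_add_one_of_lt (Fin.lt_last_iff_ne_last.2 hl)]
      exact this.2
  choose y hy1 hy2 hy3 using key
  choose hne hmem using hy1
  choose ψ hψ hs hd using hy2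
  have hc := hcyc n (fun i => ⟨v i.val, y i, hne i⟩) (fun i => ψ (i - 1)) hmem
    (fun i => hψ _) (fun i => by
      have := hs (i - 1)
      rw [sub_add_cancel] at this
      exact this.symm) (fun i => by
      simp only [add_sub_cancel_right]
      exact (hd i).symm)
  have hyl := hy3 (Fin.last n) rfl
  constructor
  · have h1 := (hc (Fin.last n)).1
    have h2 : UE Su (y (Fin.last n)) (v (Fin.last n).val) := ⟨_, h1⟩
    rw [hyl] at h2
    simpa [hn] using h2
  · have h1 := (hc (Fin.last n + 1)).2
    simp only [add_sub_cancel_right] at h1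
    refine ⟨_, h1, ?_, ?_⟩
    · rw [← hyl]
      exact hd _
    · have := hs (Fin.last n)
      simp only [Fin.last_add_one, Fin.val_zero, h0] at this
      exact this

theorem normal_form {Su : Set (UID σ)} {Sf : Set (UFD σ)}
    (htU : TransClosedUID Su) (htF : TransClosedUFD Sf) {p q : σ.Pos}
    (h : Relation.ReflTransGen (cgEdge Su Sf) p q) :
    ∃ a b, (p = a ∨ FE Sf p a) ∧ Relation.ReflTransGen (StepE Su Sf) a b ∧
      (b = q ∨ UE Su b q) := by
  induction h using Relation.ReflTransGen.head_induction_on with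
  | refl => exact ⟨q, q, Or.inl rfl, .refl, Or.inl rfl⟩
  | @head x x' hs _ ih =>
    obtain ⟨a, b, h1, h2, h3⟩ := ih
    rcases hs with hu | hf
    · change UE Su x x' at hu
      rcases h1 with rfl | h1
      · rcases Relation.ReflTransGen.cases_head h2 with rfl | ⟨c, ⟨m, hm1, hm2⟩, hc⟩
        · refine ⟨x, x, Or.inl rfl, .refl, ?_⟩
          rcases h3 with rfl | h3
          · exact Or.inr hu
          · by_cases hx : x = q
            · exact Or.inl hx
            · exact Or.inr (hu.trans' htU h3 hx)
        · by_cases hx : x = m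
          · subst hx
            exact ⟨c, b, Or.inr hm2, hc, h3⟩
          · exact ⟨x, b, Or.inl rfl, .head ⟨m, hu.trans' htU hm1 hx, hm2⟩ hc, h3⟩
      · exact ⟨x, b, Or.inl rfl, .head ⟨x', hu, h1⟩ h2, h3⟩
    · change FE Sf x x' at hf
      refine ⟨a, b, ?_, h2, h3⟩
      rcases h1 with rfl | h1
      · exact Or.inr hf
      · by_cases hx : x = a
        · exact Or.inl hx
        · exact Or.inr (hf.trans' htF h1 hx)

theorem UE_rev {Su : Set (UID σ)} {Sf : Set (UFD σ)}
    (htU : TransClosedUID Su) (htF : TransClosedUFD Sf) (hcyc : CycleClosed Su Sf)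
    {p q : σ.Pos} (hpq : UE Su p q)
    (h : Relation.ReflTransGen (cgEdge Su Sf) q p) : UE Su q p := by
  have hne : q ≠ p := hpq.1.symm
  obtain ⟨a, b, h1, h2, h3⟩ := normal_form htU htF h
  have fin : UE Su q b → UE Su q p := by
    intro hq
    rcases h3 with rfl | h3
    · exact hq
    · exact hq.trans' htU h3 hne
  by_cases hbq : b = q
  · subst hbq
    exact h3.resolve_left hne
  have hb : UE Su b q := by
    rcases h3 with rfl | h3
    · exact hpq
    · exact h3.trans' htU hpq hbq
  apply fin
  rcases h1 with rfl | h1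
  · rcases Relation.ReflTransGen.cases_head h2 with h | ⟨c, ⟨m, hm1, hm2⟩, hc⟩
    · exact absurd h.symm hbq
    · by_cases hbm : b = m
      · subst hbm
        exact hm1
      · exact hm1.trans' htU (cycle_rev hcyc (hb.trans' htU hm1 hbm) hm2 hc).1 (Ne.symm hbq)
  · exact (cycle_rev hcyc hb h1 h2).1

theorem FE_rev {Su : Set (UID σ)} {Sf : Set (UFD σ)}
    (htU : TransClosedUID Su) (htF : TransClosedUFD Sf) (hcyc : CycleClosed Su Sf)
    {p q : σ.Pos} (hpq : FE Sf p q)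
    (h : Relation.ReflTransGen (cgEdge Su Sf) q p) : FE Sf q p := by
  have hne : q ≠ p := hpq.ne'.symm
  obtain ⟨a, b, h1, h2, h3⟩ := normal_form htU htF h
  have fin : FE Sf a p → FE Sf q p := by
    intro hq
    rcases h1 with rfl | h1
    · exact hq
    · exact h1.trans' htF hq hne
  by_cases hpa : p = a
  · subst hpa
    exact h1.resolve_left hne
  have hp : FE Sf p a := by
    rcases h1 with rfl | h1
    · exact hpq
    · exact hpq.trans' htF h1 hpa
  apply fin
  rcases h3 with rfl | h3
  · rcases Relation.ReflTransGen.cases_tail h2 with h | ⟨c, hc, ⟨m, hm1, hm2⟩⟩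
    · exact absurd h hpa
    · by_cases hma : m = a
      · subst hma
        exact hm2
      · exact (cycle_rev hcyc hm1 (hm2.trans' htF hp hma) hc).2.trans' htF hm2 (Ne.symm hpa)
  · exact (cycle_rev hcyc h3 hp h2).2

/-- **Cycles in the constraint graph force reversibility.** If `Su ∪ Sf` is closed
under the UID transitivity rule, the UFD transitivity rule, and the cycle rule, then
any dependency whose associated edge lies on a directed cycle of the constraint graph
has its reverse in the constraint set. -/
theorem cycle_edge_reversible
    {σ : Sig} (Su : Set (UID σ)) (Sf : Set (UFD σ))
    (htU : TransClosedUID Su) (htF : TransClosedUFD Sf)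
    (hcyc : CycleClosed Su Sf) :
    (∀ τ ∈ Su, Relation.ReflTransGen (cgEdge Su Sf) τ.dst τ.src → τ.rev ∈ Su) ∧
    (∀ φ ∈ Sf,
      Relation.ReflTransGen (cgEdge Su Sf) (UFD.posSrc φ) (UFD.posDst φ) →
      φ.rev ∈ Sf) := by
  refine ⟨fun τ hτ h => ?_, fun φ hφ h => ?_⟩
  · exact (UE_rev htU htF hcyc (p := τ.src) (q := τ.dst) ⟨τ.ne, hτ⟩ h).2
  · obtain ⟨ψ, hψ, h1, h2⟩ := FE_rev htU htF hcyc ⟨φ, hφ, rfl, rfl⟩ h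
    have : ψ = φ.rev := by
      obtain ⟨R, a, b, hab⟩ := φ
      obtain ⟨R', c, d, hcd⟩ := ψ
      simp only [UFD.posSrc, UFD.posDst] at h1 h2
      obtain ⟨rfl, h4⟩ := Sigma.mk.inj_iff.1 h1
      obtain rfl := eq_of_heq h4
      obtain ⟨_, h5⟩ := Sigma.mk.inj_iff.1 h2
      obtain rfl := eq_of_heq h5
      rfl
    exact this ▸ hψ

end FQA
end

section
/- (Existence of n-acyclic groups) For every n ∈ ℕ and every finite nonempty set X, there exists a finite group G generated by (a copy of) X whose girth under X is at least n; equivalently, every nonempty word w₁⋯w_m with each wᵢ ∈ X ∪ X⁻¹, with w_{i+1} ≠ wᵢ⁻¹ for all 1 ≤ i < m, and with m < n, satisfies w₁⋯w_m ≠ e in G. -/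
namespace FQA

/-- A finite group generated by (a copy of) `X` whose girth under `X` is at least
`n`: every nonempty word `w₁ ⋯ w_m` with letters in `X ∪ X⁻¹`, without consecutive
mutually inverse letters, and of length `m < n`, has product different from the
identity. -/
structure NAcyclicGroup (n : ℕ) (X : Type) where
  G : Type
  [grp : Group G]
  [fin : Finite G]
  f : X → G
  inj : Function.Injective f
  gen : Subgroup.closure (Set.range f) = ⊤
  girth : ∀ (m : ℕ) (w : Fin m → G), 0 < m → m < n →
      (∀ i, ∃ x : X, w i = f x ∨ w i = (f x)⁻¹) →
      (∀ (i : ℕ) (hi : i + 1 < m),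
          w ⟨i + 1, hi⟩ ≠ (w ⟨i, Nat.lt_of_succ_lt hi⟩)⁻¹) →
      (List.ofFn w).prod ≠ 1

section Helpers
open Classical

abbrev Ball (X : Type) (N : ℕ) := {g : FreeGroup X // g.norm ≤ N}

theorem ball_finite (X : Type) [Finite X] (N : ℕ) : Finite (Ball X N) := by
  have : Finite {l : List (X × Bool) | l.length ≤ N} := List.finite_length_le _ N
  refine Finite.of_injective
    (fun g : Ball X N => (⟨g.1.toWord, g.2⟩ : {l : List (X × Bool) | l.length ≤ N})) ?_
  intro a b h
  apply Subtype.ext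
  apply FreeGroup.toWord_injective
  exact congrArg Subtype.val h

noncomputable def parEquiv {X : Type} (N : ℕ) (x : X) :
    {v : Ball X N // (FreeGroup.of x * v.1).norm ≤ N} ≃
      {v : Ball X N // ((FreeGroup.of x)⁻¹ * v.1).norm ≤ N} where
  toFun v := ⟨⟨FreeGroup.of x * v.1.1, v.2⟩, by simpa using v.1.2⟩
  invFun v := ⟨⟨(FreeGroup.of x)⁻¹ * v.1.1, v.2⟩, by simpa using v.1.2⟩
  left_inv v := by apply Subtype.ext; apply Subtype.ext; simp
  right_inv v := by apply Subtype.ext; apply Subtype.ext; simp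

theorem exists_perm {X : Type} [Finite X] (N : ℕ) (x : X) :
    ∃ s : Equiv.Perm (Ball X N),
      (∀ v : Ball X N, (FreeGroup.of x * v.1).norm ≤ N → (s v).1 = FreeGroup.of x * v.1) ∧
      (∀ v : Ball X N, ((FreeGroup.of x)⁻¹ * v.1).norm ≤ N →
        (s⁻¹ v).1 = (FreeGroup.of x)⁻¹ * v.1) := by
  have := ball_finite X N
  have := Fintype.ofFinite (Ball X N)
  have h1 : ∀ v : Ball X N, (FreeGroup.of x * v.1).norm ≤ N →
      ((parEquiv N x).extendSubtype v).1 = FreeGroup.of x * v.1 := by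
    intro v hv
    have h := Equiv.extendSubtype_apply_of_mem (parEquiv N x) v hv
    rw [h]
    rfl
  refine ⟨(parEquiv N x).extendSubtype, h1, ?_⟩
  intro v hv
  have h2 := h1 ⟨(FreeGroup.of x)⁻¹ * v.1, hv⟩ (by simpa using v.2)
  have h3 : (parEquiv N x).extendSubtype ⟨(FreeGroup.of x)⁻¹ * v.1, hv⟩ = v := by
    apply Subtype.ext
    rw [h2]; simp
  have h4 : (parEquiv N x).extendSubtype⁻¹ v = ⟨(FreeGroup.of x)⁻¹ * v.1, hv⟩ :=
    (Equiv.symm_apply_eq _).2 h3.symm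
  rw [h4]

noncomputable def sg {X : Type} [Finite X] (N : ℕ) (x : X) : Equiv.Perm (Ball X N) :=
  (exists_perm N x).choose

theorem word_apply {X : Type} [Finite X] (N : ℕ) (L : List (X × Bool)) (hL : L.length ≤ N) :
    (((L.map (fun p : X × Bool => if p.2 then sg N p.1 else (sg N p.1)⁻¹)).prod)
      (⟨1, by simp⟩ : Ball X N)).1 = FreeGroup.mk L := by
  induction L with
  | nil => simp [FreeGroup.one_eq_mk]
  | cons a L ih =>
    obtain ⟨x, b⟩ := a
    have ih := ih (by simp at hL; omega)
    have hn : (FreeGroup.mk ((x, b) :: L)).norm ≤ N := FreeGroup.norm_mk_le.trans hL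
    have hs := (exists_perm N x).choose_spec
    rw [List.map_cons, List.prod_cons, Equiv.Perm.mul_apply]
    cases b with
    | true =>
      have e : FreeGroup.mk ((x, true) :: L) = FreeGroup.of x * FreeGroup.mk L := by
        simp [FreeGroup.of, FreeGroup.mul_mk]
      rw [e] at hn ⊢
      rw [← ih] at hn ⊢
      exact hs.1 _ hn
    | false =>
      have e : FreeGroup.mk ((x, false) :: L) = (FreeGroup.of x)⁻¹ * FreeGroup.mk L := by
        simp [FreeGroup.of, FreeGroup.mul_mk, FreeGroup.inv_mk, FreeGroup.invRev]
      rw [e] at hn ⊢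
      rw [← ih] at hn ⊢
      exact hs.2 _ hn

theorem sg_inj {X : Type} [Finite X] (N : ℕ) (hN : 1 ≤ N) :
    Function.Injective (sg N : X → Equiv.Perm (Ball X N)) := by
  intro x y h
  have hx := word_apply N [(x, true)] (by simpa using hN)
  have hy := word_apply N [(y, true)] (by simpa using hN)
  simp only [List.map_cons, List.map_nil, List.prod_singleton, if_true] at hx hy
  rw [h, hy] at hx
  exact (FreeGroup.of_injective hx).symm

end Helpers

/-- **Existence of `n`-acyclic groups.** For every `n ∈ ℕ` and every finite nonempty
set `X`, there exists a finite group generated by a copy of `X` whose girth under `X`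
is at least `n`. -/
theorem acyclic_groups_exist (n : ℕ) (X : Type) [Finite X] [Nonempty X] :
    Nonempty (NAcyclicGroup n X) := by
  classical
  have := ball_finite X (n + 1)
  let H : Subgroup (Equiv.Perm (Ball X (n + 1))) := Subgroup.closure (Set.range (sg (n + 1)))
  let f : X → H := fun x => ⟨sg (n + 1) x, Subgroup.subset_closure ⟨x, rfl⟩⟩
  refine ⟨{ G := H, f := f, inj := ?_, gen := ?_, girth := ?_ }⟩
  · intro x y h
    exact sg_inj (n + 1) (by omega) (congrArg Subtype.val h)
  · have h := Subgroup.closure_closure_coe_preimage (k := Set.range (sg (X := X) (n + 1)))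
    convert h using 2
    ext g
    constructor
    · rintro ⟨x, rfl⟩
      exact ⟨x, rfl⟩
    · rintro ⟨x, hx⟩
      exact ⟨x, Subtype.ext hx⟩
  · intro m w hm hmn hw hred hprod
    have hw' : ∀ i, ∃ p : X × Bool, w i = if p.2 then f p.1 else (f p.1)⁻¹ := by
      intro i
      obtain ⟨x, h | h⟩ := hw i
      · exact ⟨(x, true), by simpa using h⟩
      · exact ⟨(x, false), by simpa using h⟩
    choose p hp using hw'
    have hL := word_apply (n + 1) (List.ofFn p) (by simp; omega)
    have hp2 : ((List.ofFn p).map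
        (fun p : X × Bool => if p.2 then sg (n + 1) p.1 else (sg (n + 1) p.1)⁻¹)).prod = 1 := by
      have h1 := congrArg H.subtype hprod
      rw [map_list_prod, map_one, List.map_ofFn] at h1
      rw [List.map_ofFn, ← h1]
      congr 2
      funext i
      simp only [Function.comp, hp i]
      split_ifs <;> rfl
    rw [hp2] at hL
    have hr : FreeGroup.IsReduced (List.ofFn p) := by
      unfold FreeGroup.IsReduced
      rw [List.isChain_iff_getElem]
      intro i hi
      simp only [List.length_ofFn] at hi
      simp only [List.getElem_ofFn]
      intro h1
      by_contra h2
      apply hred i (by omega)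
      rw [hp, hp]
      rw [← h1]
      revert h2
      cases (p ⟨i, by omega⟩).2 <;> cases (p ⟨i + 1, by omega⟩).2 <;> simp
    have h3 := hr.reduce_eq
    rw [← FreeGroup.toWord_mk, ← hL] at h3
    simp at h3
    omega

end FQA
end

section
/- (Simple Product Lemma) Let Σ be a finitely closed set of FDs and UIDs, let I₀ be a finite individualizing instance, let I be a finite superinstance of I₀, and let G be a finite group generated by the fact labels Λ(I) whose girth under Λ(I) is at least 2k+1. If I is (k·(w+1))-sound for the class ACQ, I₀, and Σ, where w is the maximal arity of a relation of σ, then the product (I, I₀) ⊗ G preserving I₀ is k-sound for the class of all Boolean CQs, I₀, and Σ. -/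
namespace FQA

variable {σ : Sig} {α β : Type}

/-- A functional dependency `R^L → R^r`, with `L` nonempty and `r ∉ L`. -/
structure FD (σ : Sig) where
  rel : σ.Rel
  lhs : Set (Fin (σ.ar rel))
  rhs : Fin (σ.ar rel)
  lhs_nonempty : lhs.Nonempty
  rhs_not_mem : rhs ∉ lhs

/-- An instance satisfies an FD if any two facts of `rel` agreeing on `lhs` agree on `rhs`. -/
def satFD (I : Inst σ α) (φ : FD σ) : Prop :=
  ∀ t u : Fin (σ.ar φ.rel) → α,
    (⟨φ.rel, t⟩ : Fact σ α) ∈ I → (⟨φ.rel, u⟩ : Fact σ α) ∈ I →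
    (∀ i ∈ φ.lhs, t i = u i) → t φ.rhs = u φ.rhs

/-- A Berge cycle of a CQ: `m + 2 ≥ 2` pairwise distinct atom occurrences and pairwise
distinct variables, cyclically incident. -/
def HasBergeCycle (q : CQ σ) : Prop :=
  ∃ m : ℕ, ∃ A : Fin (m + 2) → Fin q.atoms.length, Function.Injective A ∧
    ∃ x : Fin (m + 2) → Fin q.nv, Function.Injective x ∧
      ∀ i : Fin (m + 2),
        (∃ a, (q.atoms.get (A i)).2 a = x i) ∧
        (∃ a, (q.atoms.get (A (i + 1))).2 a = x i)

/-- An acyclic CQ (ACQ): no Berge cycle and no variable occurring twice in one atom. -/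
def IsACQ (q : CQ σ) : Prop :=
  ¬ HasBergeCycle q ∧ ∀ A ∈ q.atoms, Function.Injective A.2

/-- An instance satisfies a set of UIDs and a set of FDs. -/
def satAllC (I : Inst σ ℕ) (Su : Set (UID σ)) (Sf : Set (FD σ)) : Prop :=
  (∀ τ ∈ Su, satUID I τ) ∧ (∀ φ ∈ Sf, satFD I φ)

/-- Unrestricted open-world entailment: every (finite or infinite) superinstance of `I₀`
satisfying the constraints satisfies `q`. -/
def unrEntails (I₀ : Inst σ ℕ) (Su : Set (UID σ)) (Sf : Set (FD σ)) (q : CQ σ) : Prop :=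
  ∀ I : Inst σ ℕ, I₀ ⊆ I → satAllC I Su Sf → satCQ I q

/-- Finite open-world entailment: every finite superinstance of `I₀` satisfying the
constraints satisfies `q`. -/
def finEntails (I₀ : Inst σ ℕ) (Su : Set (UID σ)) (Sf : Set (FD σ)) (q : CQ σ) : Prop :=
  ∀ I : Inst σ ℕ, I₀ ⊆ I → I.Finite → satAllC I Su Sf → satCQ I q

/-- A (nontrivial) UID is finitely implied by the constraints: it holds in every finite
instance satisfying them. -/
def finImpUID (Su : Set (UID σ)) (Sf : Set (FD σ)) (τ : UID σ) : Prop :=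
  ∀ I : Inst σ ℕ, I.Finite → satAllC I Su Sf → satUID I τ

/-- A (nontrivial) FD is finitely implied by the constraints: it holds in every finite
instance satisfying them. -/
def finImpFD (Su : Set (UID σ)) (Sf : Set (FD σ)) (φ : FD σ) : Prop :=
  ∀ I : Inst σ ℕ, I.Finite → satAllC I Su Sf → satFD I φ

/-- Fact labels: a fact together with one of its positions. -/
abbrev LabT (σ : Sig) : Type := Σ F : Fact σ ℕ, Fin (σ.ar F.1)

/-- The product of `I` by the group `G` preserving `I₀`: facts of `I₀` are copied
along each `g ∈ G` diagonally, facts of `I ∖ I₀` are copied with each element shifted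
by the corresponding fact label; the function `emb` realizes the pairs `(a, g)` as
elements of the fixed countable domain. -/
def prodInst (I₀ I : Inst σ ℕ) {G : Type} [Group G]
    (lab : LabT σ → G) (emb : ℕ → G → ℕ) : Inst σ ℕ :=
  {F' | ∃ (g : G) (F : Fact σ ℕ),
      (F ∈ I₀ ∧ F' = ⟨F.1, fun i => emb (F.2 i) g⟩) ∨
      (F ∈ I ∧ F ∉ I₀ ∧ F' = ⟨F.1, fun i => emb (F.2 i) (g * lab ⟨F, i⟩)⟩)}

/-- `I₀` is individualizing: each element `a` of its domain has a dedicated fresh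
unary relation `P a` containing exactly the fact `P_a(a)` in `I₀`, and these
relations occur in no constraint. -/
def Individualizing (I₀ : Inst σ ℕ) (Su : Set (UID σ)) (Sf : Set (FD σ)) : Prop :=
  ∃ P : ℕ → σ.Rel,
    (∀ a ∈ activeDom I₀, σ.ar (P a) = 1) ∧
    (∀ a ∈ activeDom I₀, ∀ b ∈ activeDom I₀, P a = P b → a = b) ∧
    (∀ a ∈ activeDom I₀, ∀ t : Fin (σ.ar (P a)) → ℕ,
        ((⟨P a, t⟩ : Fact σ ℕ) ∈ I₀ ↔ t = fun _ => a)) ∧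
    (∀ a ∈ activeDom I₀, ∀ τ ∈ Su, τ.src.1 ≠ P a ∧ τ.dst.1 ≠ P a) ∧
    (∀ a ∈ activeDom I₀, ∀ φ ∈ Sf, φ.rel ≠ P a)

/-- Map a function over a fact. -/
def fmap {σ : Sig} {α β : Type} (f : α → β) (A : Fact σ α) : Fact σ β := ⟨A.1, fun i => f (A.2 i)⟩

lemma exists_cq {σ : Sig} {V : Type} (L : List (Fact σ V)) :
    ∃ (q : CQ σ) (ρ : Fin q.nv → V), Function.Injective ρ ∧ q.atoms.map (fmap ρ) = L := by
  classical
  set W : Set V := ⋃ A ∈ {A | A ∈ L}, Set.range A.2 with hW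
  have hfin : W.Finite := by
    refine Set.Finite.biUnion (List.finite_toSet L) ?_
    intro A _
    exact Set.finite_range _
  have : Finite W := hfin
  obtain ⟨n, ⟨e⟩⟩ := Finite.exists_equiv_fin W
  have hmem : ∀ A ∈ L, ∀ i, A.2 i ∈ W := by
    intro A hA i
    rw [hW]
    simp only [Set.mem_iUnion]
    exact ⟨A, hA, i, rfl⟩
  refine ⟨⟨n, L.attach.map (fun A => ⟨A.1.1, fun i => e ⟨A.1.2 i, hmem A.1 A.2 i⟩⟩), ?_⟩,
    fun x => (e.symm x).1, ?_, ?_⟩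
  · intro x
    have hx : (e.symm x).1 ∈ ⋃ A ∈ {A | A ∈ L}, Set.range A.2 := (e.symm x).2
    simp only [Set.mem_iUnion] at hx
    obtain ⟨A, hA, i, hi⟩ := hx
    refine ⟨_, List.mem_map.2 ⟨⟨A, hA⟩, List.mem_attach _ _, rfl⟩, i, ?_⟩
    have : (⟨A.2 i, hmem A hA i⟩ : W) = e.symm x := Subtype.ext hi
    simp only [this, Equiv.apply_symm_apply]
  · intro x y h
    exact e.symm.injective (Subtype.ext h)
  · simp only [List.map_map]
    conv_rhs => rw [← List.attach_map_subtype_val L]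
    apply List.map_congr_left
    intro A _
    simp [fmap, Function.comp]

lemma word_prod {G : Type} [Group G] (γ a b : ℕ → G) (h : ∀ i, γ i * a i = γ (i + 1) * b i)
    (n : ℕ) : γ 0 * ((List.range (2 * n)).map
      (fun j => if j % 2 = 0 then a (j / 2) else (b (j / 2))⁻¹)).prod = γ n := by
  induction n with
  | zero => simp
  | succ n ih =>
    have e : 2 * (n + 1) = 2 * n + 1 + 1 := by ring
    rw [e, List.range_succ, List.range_succ]
    simp only [List.map_append, List.prod_append, List.map_cons, List.map_nil, List.prod_cons,
      List.prod_nil, mul_one]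
    rw [← mul_assoc, ← mul_assoc, ih]
    have h1 : 2 * n % 2 = 0 := by omega
    have h2 : ¬ (2 * n + 1) % 2 = 0 := by omega
    have h3 : 2 * n / 2 = n := by omega
    have h4 : (2 * n + 1) / 2 = n := by omega
    rw [if_pos h1, if_neg h2, h3, h4, h]
    simp

open scoped Fin.NatCast in
/-- Cycle contradiction. -/
lemma no_cycle {G X : Type} [Group G] (k m : ℕ) (hk : m + 2 ≤ k)
    (good : X → Prop) (lab : X → G)
    (hgirth : ∀ (m : ℕ) (wd : Fin m → G), 0 < m → m ≤ 2 * k →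
        (∀ i, ∃ x : X, good x ∧ (wd i = lab x ∨ wd i = (lab x)⁻¹)) →
        (∀ (i : ℕ) (hi : i + 1 < m),
            wd ⟨i + 1, hi⟩ ≠ (wd ⟨i, Nat.lt_of_succ_lt hi⟩)⁻¹) →
        (List.ofFn wd).prod ≠ 1)
    (γ : Fin (m + 2) → G) (p q : Fin (m + 2) → X)
    (hp : ∀ i, good (p i)) (hq : ∀ i, good (q i))
    (hstep : ∀ i, γ i * lab (p i) = γ (i + 1) * lab (q i))
    (h1 : ∀ i, lab (p i) ≠ lab (q i)) (h2 : ∀ i, lab (q i) ≠ lab (p (i + 1))) : False := by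
  set a : ℕ → G := fun j => lab (p (j : Fin (m + 2))) with ha
  set b : ℕ → G := fun j => lab (q (j : Fin (m + 2))) with hb
  have hw := word_prod (fun j : ℕ => γ (j : Fin (m + 2))) a b
    (by intro i; simpa [ha, hb] using hstep i) (m + 2)
  have h0 : ((m + 2 : ℕ) : Fin (m + 2)) = 0 := Fin.natCast_self _
  simp only [h0] at hw
  have hpr := mul_eq_left.mp hw
  refine hgirth (2 * (m + 2))
    (fun j => (fun j : ℕ => if j % 2 = 0 then a (j / 2) else (b (j / 2))⁻¹) j.1)
    (by omega) (by omega) ?_ ?_ ?_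
  · intro i
    by_cases h : i.1 % 2 = 0
    · exact ⟨p ((i.1 / 2 : ℕ) : Fin (m + 2)), hp _, Or.inl (by simp [h, ha])⟩
    · exact ⟨q ((i.1 / 2 : ℕ) : Fin (m + 2)), hq _, Or.inr (by simp only [h, hb, if_false])⟩
  · intro i hi
    by_cases h : i % 2 = 0
    · have h' : ¬ (i + 1) % 2 = 0 := by omega
      have h3 : (i + 1) / 2 = i / 2 := by omega
      simp only [h, h', if_true, if_false, h3]
      intro hh
      exact h1 _ (inv_injective hh).symm
    · have h' : (i + 1) % 2 = 0 := by omega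
      have h3 : (i + 1) / 2 = i / 2 + 1 := by omega
      simp only [h, h', if_true, if_false, h3, inv_inv]
      intro hh
      apply h2 ((i / 2 : ℕ) : Fin (m + 2))
      rw [ha, hb] at hh
      simpa using hh.symm
  · rw [List.ofFn_eq_map]
    rw [← hpr, ← List.map_coe_finRange_eq_range, List.map_map]
    rfl

open Classical in
/-- The variable of the acyclic query at position `i` of the copy of `F` at `g`. -/
noncomputable def vv {σ : Sig} (I₀ : Inst σ ℕ) {G : Type} [Group G] (lab : LabT σ → G)
    (g : G) (F : Fact σ ℕ) (i : Fin (σ.ar F.1)) : ℕ × G × Option (G × LabT σ) :=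
  if F.2 i ∈ activeDom I₀ then (F.2 i, 1, some (g, ⟨F, i⟩))
  else (F.2 i, g * lab ⟨F, i⟩, none)

lemma vv_fst {σ : Sig} (I₀ : Inst σ ℕ) {G : Type} [Group G] (lab : LabT σ → G)
    (g : G) (F : Fact σ ℕ) (i : Fin (σ.ar F.1)) : (vv I₀ lab g F i).1 = F.2 i := by
  unfold vv; split_ifs <;> rfl

lemma vv_eq {σ : Sig} (I₀ : Inst σ ℕ) {G : Type} [Group G] (lab : LabT σ → G)
    (g g' : G) (F F' : Fact σ ℕ) (i : Fin (σ.ar F.1)) (i' : Fin (σ.ar F'.1))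
    (h : vv I₀ lab g F i = vv I₀ lab g' F' i') :
    (g = g' ∧ (⟨F, i⟩ : LabT σ) = ⟨F', i'⟩) ∨ g * lab ⟨F, i⟩ = g' * lab ⟨F', i'⟩ := by
  unfold vv at h
  split_ifs at h
  · left
    simp only [Prod.mk.injEq, Option.some.injEq] at h
    exact h.2.2
  · simp at h
  · simp at h
  · right
    simp only [Prod.mk.injEq] at h
    exact h.2.1

/-- **Simple Product Lemma.** Let `Su ∪ Sf` be finitely closed UIDs and FDs, `I₀` a
finite individualizing instance, `I` a finite superinstance of `I₀`, and `G` a finite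
group generated by the fact labels of `I` with girth at least `2k + 1` under them
(the labels embed injectively into `G`). If `I` is `(k·(w+1))`-sound for ACQs, `I₀`,
and the constraints, where `w` is the maximal arity of the signature, then the
product of `I` by `G` preserving `I₀` (realized in the fixed countable domain by any
injection `emb` identifying `(a, 1)` with `a` for `a ∈ dom(I₀)`) is a superinstance
of `I₀` which is `k`-sound for all Boolean CQs, `I₀`, and the constraints. -/
theorem simple_product
    {σ : Sig} (Su : Set (UID σ)) (Sf : Set (FD σ))
    (hclU : ∀ τ : UID σ, finImpUID Su Sf τ → τ ∈ Su)
    (hclF : ∀ φ : FD σ, finImpFD Su Sf φ → φ ∈ Sf)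
    (I₀ I : Inst σ ℕ) (hI₀fin : I₀.Finite) (hIfin : I.Finite) (hsub : I₀ ⊆ I)
    (hind : Individualizing I₀ Su Sf)
    (k w : ℕ) (hw : IsGreatest (Set.range σ.ar) w)
    (G : Type) [Group G] [Finite G]
    (lab : LabT σ → G)
    (hinj : ∀ x y : LabT σ, x.1 ∈ I → x.1 ∉ I₀ → y.1 ∈ I → y.1 ∉ I₀ →
        lab x = lab y → x = y)
    (hgen : Subgroup.closure {g : G | ∃ x : LabT σ, x.1 ∈ I ∧ x.1 ∉ I₀ ∧ g = lab x} = ⊤)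
    (hgirth : ∀ (m : ℕ) (wd : Fin m → G), 0 < m → m ≤ 2 * k →
        (∀ i, ∃ x : LabT σ, x.1 ∈ I ∧ x.1 ∉ I₀ ∧ (wd i = lab x ∨ wd i = (lab x)⁻¹)) →
        (∀ (i : ℕ) (hi : i + 1 < m),
            wd ⟨i + 1, hi⟩ ≠ (wd ⟨i, Nat.lt_of_succ_lt hi⟩)⁻¹) →
        (List.ofFn wd).prod ≠ 1)
    (hsound : ∀ q : CQ σ, IsACQ q → q.size ≤ k * (w + 1) → satCQ I q →
        unrEntails I₀ Su Sf q)
    (emb : ℕ → G → ℕ)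
    (hembinj : Function.Injective (fun ag : ℕ × G => emb ag.1 ag.2))
    (hembbase : ∀ a ∈ activeDom I₀, emb a 1 = a) :
    I₀ ⊆ prodInst I₀ I lab emb ∧
    ∀ q : CQ σ, q.size ≤ k → satCQ (prodInst I₀ I lab emb) q →
      unrEntails I₀ Su Sf q := by
  classical
  constructor
  · intro F hF
    refine ⟨1, F, Or.inl ⟨hF, ?_⟩⟩
    obtain ⟨R, t⟩ := F
    congr 1
    funext i
    exact (hembbase _ ⟨⟨R, t⟩, hF, i, rfl⟩).symm
  intro q hqk ⟨h, hh⟩ J hJ₀ hJ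
  obtain ⟨P, hP1, hPinj, hPiff, hPU, hPF⟩ := hind
  have hch : ∀ A : Fact σ (Fin q.nv), ∃ (g : G) (F : Fact σ ℕ), A ∈ q.atoms →
      (F ∈ I₀ ∧ fmap h A = ⟨F.1, fun i => emb (F.2 i) g⟩) ∨
      (F ∈ I ∧ F ∉ I₀ ∧ fmap h A = ⟨F.1, fun i => emb (F.2 i) (g * lab ⟨F, i⟩)⟩) := by
    intro A
    by_cases hA : A ∈ q.atoms
    · obtain ⟨g, F, H⟩ := hh A hA
      exact ⟨g, F, fun _ => H⟩
    · exact ⟨1, fmap (fun _ => 0) A, fun h => absurd h hA⟩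
  choose gg FF hF using hch
  set S : Finset (G × Fact σ ℕ) :=
    (q.atoms.toFinset.image (fun A => (gg A, FF A))).filter (fun c => c.2 ∈ I ∧ c.2 ∉ I₀) with hS
  have hScard : S.card ≤ k := by
    refine (Finset.card_filter_le _ _).trans (Finset.card_image_le.trans ?_)
    exact (List.toFinset_card_le _).trans hqk
  have hSgood : ∀ c ∈ S, c.2 ∈ I ∧ c.2 ∉ I₀ := fun c hc => (Finset.mem_filter.1 hc).2
  let mf : G × Fact σ ℕ → Fact σ (ℕ × G × Option (G × LabT σ)) :=
    fun c => ⟨c.2.1, fun i => vv I₀ lab c.1 c.2 i⟩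
  let pf : G × Fact σ ℕ → List (Fact σ (ℕ × G × Option (G × LabT σ))) :=
    fun c => ((List.finRange (σ.ar c.2.1)).filter (fun i => c.2.2 i ∈ activeDom I₀)).map
      (fun i => ⟨P (c.2.2 i), fun _ => vv I₀ lab c.1 c.2 i⟩)
  set mains := S.toList.map mf with hmains
  set Ps := S.toList.flatMap pf with hPs
  have hpflen : ∀ c, (pf c).length ≤ w := by
    intro c
    simp only [pf, List.length_map]
    refine (List.length_filter_le _ _).trans ?_
    rw [List.length_finRange]
    exact hw.2 ⟨_, rfl⟩
  have hPslen : Ps.length ≤ S.card * w := by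
    rw [hPs, List.length_flatMap, ← Finset.length_toList]
    have := List.sum_le_card_nsmul (S.toList.map (fun c => (pf c).length)) w (by
      intro x hx
      obtain ⟨c, _, rfl⟩ := List.mem_map.1 hx
      exact hpflen c)
    simpa using this
  have hmlen : mains.length = S.card := by simp [hmains]
  obtain ⟨q', ρ, hρ, hq'⟩ := exists_cq (mains ++ Ps)
  have hsz : q'.atoms.length = (mains ++ Ps).length := by rw [← hq']; simp
  -- membership transfer
  have hmemq : ∀ A ∈ q'.atoms, fmap ρ A ∈ mains ++ Ps := by
    intro A hA; rw [← hq']; exact List.mem_map_of_mem hA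
  have hPmem : ∀ B ∈ Ps, ∃ c ∈ S, ∃ i, c.2.2 i ∈ activeDom I₀ ∧
      B = ⟨P (c.2.2 i), fun _ => vv I₀ lab c.1 c.2 i⟩ := by
    intro B hB
    obtain ⟨c, hc, hB⟩ := List.mem_flatMap.1 hB
    obtain ⟨i, hi, rfl⟩ := List.mem_map.1 hB
    exact ⟨c, Finset.mem_toList.1 hc, i, by simpa using (List.mem_filter.1 hi).2, rfl⟩
  have hMmem : ∀ B ∈ mains, ∃ c ∈ S, B = mf c := by
    intro B hB
    obtain ⟨c, hc, rfl⟩ := List.mem_map.1 hB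
    exact ⟨c, Finset.mem_toList.1 hc, rfl⟩
  have hvinj : ∀ c ∈ S, Function.Injective (fun i => vv I₀ lab c.1 c.2 i) := by
    intro c hc i j hij
    have hg := hSgood c hc
    have key : (⟨c.2, i⟩ : LabT σ) = ⟨c.2, j⟩ := by
      rcases vv_eq _ _ _ _ _ _ _ _ hij with h | h
      · exact h.2
      · exact hinj _ _ hg.1 hg.2 hg.1 hg.2 (mul_left_cancel h)
    simpa using key
  have hacq : IsACQ q' := by
    constructor
    · rintro ⟨m, A, hA, x, hx, hcyc⟩
      have hget : ∀ j : Fin q'.atoms.length, fmap ρ (q'.atoms.get j)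
          = (mains ++ Ps)[j.1]'(hsz ▸ j.2) := by
        intro j
        have : (q'.atoms.map (fmap ρ))[j.1]'(by simp) = (mains ++ Ps)[j.1]'(hsz ▸ j.2) := by
          simp only [hq']
        rw [← this]; simp
      have hne : ∀ i : Fin (m + 2), i ≠ i + 1 := by
        intro i hi
        have : (1 : Fin (m + 2)) = 0 := by
          have := left_eq_add.mp hi
          exact this
        exact absurd this (by simp)
      -- every atom of the cycle has two variables
      have hlt' : ∀ i : Fin (m + 2), (A (i + 1)).1 < S.card := by
        intro i
        by_contra hcon
        have hmem : fmap ρ (q'.atoms.get (A (i + 1))) ∈ Ps := by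
          rw [hget]
          rw [List.getElem_append_right (by omega)]
          exact List.getElem_mem _
        obtain ⟨c, hc, i', _, hB⟩ := hPmem _ hmem
        obtain ⟨a, ha⟩ := (hcyc i).2
        obtain ⟨a', ha'⟩ := (hcyc (i + 1)).1
        have hconst : ∀ B : Fact σ (ℕ × G × Option (G × LabT σ)), B ∈ Ps →
            ∀ s t, B.2 s = B.2 t := by
          intro B hB s t
          obtain ⟨c, hc, i', _, rfl⟩ := hPmem _ hB
          rfl
        have := hconst _ hmem a a'
        simp only [fmap] at this
        rw [ha, ha'] at this
        exact hne i (hx (hρ this))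
      have hlt : ∀ i : Fin (m + 2), (A i).1 < S.card := by
        intro i
        have := hlt' (i - 1)
        rwa [sub_add_cancel] at this
      let c : Fin (m + 2) → G × Fact σ ℕ := fun i =>
        S.toList[(A i).1]'(by rw [Finset.length_toList]; exact hlt i)
      have hcS : ∀ i, c i ∈ S := fun i => Finset.mem_toList.1 (List.getElem_mem _)
      have hcinj : Function.Injective c := by
        intro i j hij
        have := (List.Nodup.getElem_inj_iff (Finset.nodup_toList S)).1 hij
        exact hA (Fin.ext this)
      have hcm : ∀ i, fmap ρ (q'.atoms.get (A i)) = mf (c i) := by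
        intro i
        rw [hget, List.getElem_append_left (by rw [hmlen]; exact hlt i)]
        simp [hmains, c]
      have hocc : ∀ i (y : Fin q'.nv), (∃ a, (q'.atoms.get (A i)).2 a = y) →
          ∃ a, vv I₀ lab (c i).1 (c i).2 a = ρ y := by
        intro i y ⟨a, ha⟩
        have hex : ∃ a, (fmap ρ (q'.atoms.get (A i))).2 a = ρ y := ⟨a, by simp only [fmap, ha]⟩
        rw [hcm] at hex
        exact hex
      have hp : ∀ i, ∃ a, vv I₀ lab (c i).1 (c i).2 a = ρ (x i) := fun i => hocc _ _ (hcyc i).1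
      have hq : ∀ i, ∃ a, vv I₀ lab (c (i+1)).1 (c (i+1)).2 a = ρ (x i) :=
        fun i => hocc _ _ (hcyc i).2
      choose p hp using hp
      choose r hr using hq
      have hstep : ∀ i, (c i).1 * lab ⟨(c i).2, p i⟩ = (c (i+1)).1 * lab ⟨(c (i+1)).2, r i⟩ := by
        intro i
        rcases vv_eq _ _ _ _ _ _ _ _ ((hp i).trans (hr i).symm) with h | h
        · exfalso
          exact hne i (hcinj (Prod.ext h.1 (congrArg Sigma.fst h.2)))
        · exact h
      have hmk : m + 2 ≤ k := by
        refine le_trans ?_ hScard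
        have := Finset.card_le_card_of_injOn c (s := Finset.univ) (t := S)
          (fun i _ => hcS i) hcinj.injOn
        simpa using this
      refine no_cycle k m hmk (fun y : LabT σ => y.1 ∈ I ∧ y.1 ∉ I₀) lab ?_
        (fun i => (c i).1) (fun i => ⟨(c i).2, p i⟩) (fun i => ⟨(c (i+1)).2, r i⟩)
        (fun i => hSgood _ (hcS i)) (fun i => hSgood _ (hcS _)) hstep ?_ ?_
      · intro m wd h1 h2 h3 h4
        refine hgirth m wd h1 h2 (fun i => ?_) h4
        obtain ⟨y, hy, hy'⟩ := h3 i
        exact ⟨y, hy.1, hy.2, hy'⟩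
      · intro i hi
        have hs := hstep i
        rw [hi] at hs
        have h1 := mul_right_cancel hs
        have h2 := hinj _ _ (hSgood _ (hcS i)).1 (hSgood _ (hcS i)).2
          (hSgood _ (hcS (i+1))).1 (hSgood _ (hcS (i+1))).2 hi
        exact hne i (hcinj (Prod.ext h1 (congrArg Sigma.fst h2)))
      · intro i hi
        have h2 := hinj _ _ (hSgood _ (hcS (i+1))).1 (hSgood _ (hcS (i+1))).2
          (hSgood _ (hcS (i+1))).1 (hSgood _ (hcS (i+1))).2 hi
        have h3 : r i = p (i + 1) := by simpa using h2
        have h4 := hr i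
        rw [h3, hp] at h4
        exact hne i (hx (hρ h4)).symm
    · intro A hA
      have hm := hmemq A hA
      have hBinj : ∀ B ∈ mains ++ Ps, Function.Injective B.2 := by
        intro B hB
        rcases List.mem_append.1 hB with hB | hB
        · obtain ⟨c, hc, rfl⟩ := hMmem _ hB
          exact hvinj c hc
        · obtain ⟨c, hc, i, hi, rfl⟩ := hPmem _ hB
          intro s t _
          have := hP1 _ hi
          apply Fin.ext
          have := s.2
          have := t.2
          simp only at *
          omega
      have := hBinj _ hm
      intro s t hst
      exact this (by simp only [fmap, hst])
  have hq'size : q'.size ≤ k * (w + 1) := by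
    unfold CQ.size
    rw [hsz, List.length_append, hmlen]
    have := Nat.mul_le_mul_right (w + 1) hScard
    linarith [Nat.mul_succ S.card w]
  have hPa : ∀ a ∈ activeDom I₀, (⟨P a, fun _ => a⟩ : Fact σ ℕ) ∈ I₀ :=
    fun a ha => (hPiff a ha _).2 rfl
  have hsat : satCQ I q' := by
    refine ⟨fun y => (ρ y).1, fun A hA => ?_⟩
    have hB : ∀ B ∈ mains ++ Ps, fmap Prod.fst B ∈ I := by
      intro B hB
      rcases List.mem_append.1 hB with hB | hB
      · obtain ⟨c, hc, rfl⟩ := hMmem _ hB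
        have : fmap Prod.fst (mf c) = c.2 := by
          simp only [fmap, mf, vv_fst]
        rw [this]
        exact (hSgood c hc).1
      · obtain ⟨c, hc, i, hi, rfl⟩ := hPmem _ hB
        simp only [fmap, vv_fst]
        exact hsub (hPa _ hi)
    exact hB _ (hmemq A hA)
  set J' : Inst σ ℕ := {F | F ∈ J ∧ ∀ a ∈ activeDom I₀, F.1 = P a → F ∈ I₀} with hJ'
  have hJ'0 : I₀ ⊆ J' := fun F hF => ⟨hJ₀ hF, fun _ _ _ => hF⟩
  have hJ's : satAllC J' Su Sf := by
    refine ⟨fun τ hτ a ha => ?_, fun φ hφ t u ht hu => hJ.2 φ hφ t u ht.1 hu.1⟩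
    obtain ⟨t, ht, hta⟩ := ha
    obtain ⟨u, hu, hua⟩ := hJ.1 τ hτ a ⟨t, ht.1, hta⟩
    exact ⟨u, ⟨hu, fun b hb hbe => absurd hbe (hPU b hb τ hτ).2⟩, hua⟩
  obtain ⟨f₀, hf₀⟩ := hsound q' hacq hq'size hsat J' hJ'0 hJ's
  set f := Function.extend ρ f₀ (fun _ => 0) with hfdef
  have hfρ : ∀ y, f (ρ y) = f₀ y := fun y => hρ.extend_apply _ _ _
  have hfL : ∀ B ∈ mains ++ Ps, fmap f B ∈ J' := by
    intro B hB
    rw [← hq'] at hB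
    obtain ⟨A, hA, rfl⟩ := List.mem_map.1 hB
    have := hf₀ A hA
    simpa only [fmap, hfρ] using this
  set D : ℕ × G → ℕ := fun ag => if ag.1 ∈ activeDom I₀ then ag.1 else f (ag.1, ag.2, none) with hD
  set H : ℕ → ℕ := Function.extend (fun ag : ℕ × G => emb ag.1 ag.2) D (fun _ => 0) with hH
  have hHe : ∀ a g, H (emb a g) = D (a, g) := fun a g => hembinj.extend_apply D _ (a, g)
  refine ⟨fun y => H (h y), fun A hA => ?_⟩
  have hgoal : (⟨A.1, fun i => H (h (A.2 i))⟩ : Fact σ ℕ) = fmap H (fmap h A) := rfl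
  rw [hgoal]
  rcases hF A hA with ⟨h1, h2⟩ | ⟨h1, h1', h2⟩
  · rw [h2]
    have : fmap H (⟨(FF A).1, fun i => emb ((FF A).2 i) (gg A)⟩ : Fact σ ℕ) = FF A := by
      have hdom : ∀ i, (FF A).2 i ∈ activeDom I₀ := fun i => ⟨_, h1, i, rfl⟩
      simp only [fmap, hHe, hD, hdom, if_true]
    rw [this]
    exact hJ₀ h1
  · rw [h2]
    have hcS : (gg A, FF A) ∈ S := by
      rw [hS, Finset.mem_filter]
      exact ⟨Finset.mem_image.2 ⟨A, List.mem_toFinset.2 hA, rfl⟩, h1, h1'⟩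
    have : fmap H (⟨(FF A).1, fun i => emb ((FF A).2 i) (gg A * lab ⟨FF A, i⟩)⟩ : Fact σ ℕ)
        = fmap f (mf (gg A, FF A)) := by
      simp only [fmap, hHe, mf]
      congr 1
      funext i
      by_cases hi : (FF A).2 i ∈ activeDom I₀
      · simp only [hD, hi, if_true]
        have hm : (⟨P ((FF A).2 i), fun _ => vv I₀ lab (gg A) (FF A) i⟩ :
            Fact σ (ℕ × G × Option (G × LabT σ))) ∈ mains ++ Ps := by
          refine List.mem_append_right _ (List.mem_flatMap.2 ⟨_, Finset.mem_toList.2 hcS, ?_⟩)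
          refine List.mem_map.2 ⟨i, ?_, rfl⟩
          exact List.mem_filter.2 ⟨List.mem_finRange _, by simpa using hi⟩
        have h5 := (hfL _ hm).2 _ hi rfl
        have h6 := (hPiff _ hi _).1 h5
        exact (congrFun h6 ⟨0, σ.ar_pos _⟩).symm
      · simp only [hD, hi, if_false, vv]
    rw [this]
    exact (hfL _ (List.mem_append_left _ (List.mem_map.2 ⟨_, Finset.mem_toList.2 hcS, rfl⟩))).1

end FQA
end
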